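/- Let (S,+,*) and (T,+,*) be two-sided restriction semigroupoids and φ : S → T a function; regard φ also as a map C(S) → C(T) between the associated locally inductive categories. Then φ is a ∨-premorphism if and only if φ : C(S) → C(T) is an ordered functor. In particular, every ∨-premorphism is order-preserving, and the composition of two ∨-premorphisms is a ∨-premorphism. -/

import Mathlib

/-!
A ∨-premorphism preserves the order because `s = s⁺t` gives `φ(s) ≤ φ(s)⁺φ(t) ≤ φ(t)`. When
`s* = t⁺`, the elements `φ(st)` and `φ(s)φ(t)` are comparable and have the same range `φ(s)⁺`, so
they are equal; this gives functoriality.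

Conversely, let `φ` be an ordered functor and let `st` be defined. Then `e = s*t⁺` is a defined
projection below both `s*` and `t⁺` (`RestrictionSgpd.meet_facts`), and `st` factors in the category
`C(S)` as `(se) ∘ (et)` with `se ≤ s` and `et ≤ t` (`RestrictionSgpd.factor`). The projection `φ(e)`
lies below both `φ(s)*` and `φ(t)⁺`, which forces `φ(s)*φ(t)⁺`, hence `φ(s)φ(t)`, to be defined
(`RestrictionSgpd.defined_of_lower`). Then `φ(st) = φ(se)φ(et) ≤ φ(s)φ(t)` by compatibility of the
order with the product (`RestrictionSgpd.mul_le`).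
-/

universe u

/-- A semigroupoid (Exel): a partially defined binary operation, associative in Exel's sense.
`defined s t` means the product `s ⋆ t` is defined; `mul` is a total function whose value is
only meaningful on defined pairs. -/
structure Semigroupoid (S : Type u) where
  defined : S → S → Prop
  mul : S → S → S
  assoc₁ : ∀ s t r, defined s t → defined t r →
    defined (mul s t) r ∧ defined s (mul t r) ∧ mul (mul s t) r = mul s (mul t r)
  assoc₂ : ∀ s t r, defined s t → defined (mul s t) r →
    defined t r ∧ defined s (mul t r) ∧ mul (mul s t) r = mul s (mul t r)
  assoc₃ : ∀ s t r, defined t r → defined s (mul t r) →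
    defined s t ∧ defined (mul s t) r ∧ mul (mul s t) r = mul s (mul t r)

/-- A left Ehresmann semigroupoid. -/
structure LeftEhresmannSgpd (S : Type u) extends Semigroupoid S where
  plus : S → S
  le1 : ∀ s, defined (plus s) s ∧ mul (plus s) s = s
  le2 : ∀ s t, defined (plus s) (plus t) →
    defined (plus t) (plus s) ∧ mul (plus s) (plus t) = mul (plus t) (plus s)
  le3 : ∀ s t, defined (plus s) (plus t) → mul (plus s) (plus t) = plus (mul (plus s) t)
  le4 : ∀ s t, defined s t → plus (mul s t) = plus (mul s (plus t))

/-- The set of projections `S⁺ = {s⁺ : s ∈ S}`. -/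
def LeftEhresmannSgpd.projections {S : Type u} (E : LeftEhresmannSgpd S) : Set S :=
  {e | ∃ s, e = E.plus s}

/-- The relation `s ≤_l t` : `s⁺t` is defined and `s⁺t = s`. -/
def LeftEhresmannSgpd.lel {S : Type u} (E : LeftEhresmannSgpd S) (s t : S) : Prop :=
  E.defined (E.plus s) t ∧ E.mul (E.plus s) t = s

/-- A two-sided Ehresmann semigroupoid. -/
structure EhresmannSgpd (S : Type u) extends Semigroupoid S where
  plus : S → S
  star : S → S
  le1 : ∀ s, defined (plus s) s ∧ mul (plus s) s = s
  le2 : ∀ s t, defined (plus s) (plus t) →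
    defined (plus t) (plus s) ∧ mul (plus s) (plus t) = mul (plus t) (plus s)
  le3 : ∀ s t, defined (plus s) (plus t) → mul (plus s) (plus t) = plus (mul (plus s) t)
  le4 : ∀ s t, defined s t → plus (mul s t) = plus (mul s (plus t))
  re1 : ∀ s, defined s (star s) ∧ mul s (star s) = s
  re2 : ∀ s t, defined (star s) (star t) →
    defined (star t) (star s) ∧ mul (star s) (star t) = mul (star t) (star s)
  re3 : ∀ s t, defined (star s) (star t) → mul (star s) (star t) = star (mul s (star t))
  re4 : ∀ s t, defined s t → star (mul s t) = star (mul (star s) t)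
  plus_star : ∀ s, star (plus s) = plus s
  star_plus : ∀ s, plus (star s) = star s

/-- The set of projections `U = S⁺ = S*`. -/
def EhresmannSgpd.projections {S : Type u} (E : EhresmannSgpd S) : Set S :=
  {e | ∃ s, e = E.plus s}

/-- `s ≤_l t` : `s⁺t` is defined and `s⁺t = s`. -/
def EhresmannSgpd.lel {S : Type u} (E : EhresmannSgpd S) (s t : S) : Prop :=
  E.defined (E.plus s) t ∧ E.mul (E.plus s) t = s

/-- `s ≤_r t` : `ts*` is defined and `ts* = s`. -/
def EhresmannSgpd.ler {S : Type u} (E : EhresmannSgpd S) (s t : S) : Prop :=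
  E.defined t (E.star s) ∧ E.mul t (E.star s) = s

/-- A two-sided restriction semigroupoid. -/
structure RestrictionSgpd (S : Type u) extends Semigroupoid S where
  plus : S → S
  star : S → S
  lr1 : ∀ s, defined (plus s) s ∧ mul (plus s) s = s
  lr2 : ∀ s t, defined (plus s) (plus t) →
    defined (plus t) (plus s) ∧ mul (plus s) (plus t) = mul (plus t) (plus s)
  lr3 : ∀ s t, defined (plus s) (plus t) → mul (plus s) (plus t) = plus (mul (plus s) t)
  lr4 : ∀ s t, defined s t →
    defined (plus (mul s t)) s ∧ mul s (plus t) = mul (plus (mul s t)) s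
  rr1 : ∀ s, defined s (star s) ∧ mul s (star s) = s
  rr2 : ∀ s t, defined (star s) (star t) →
    defined (star t) (star s) ∧ mul (star s) (star t) = mul (star t) (star s)
  rr3 : ∀ s t, defined (star s) (star t) → mul (star s) (star t) = star (mul s (star t))
  rr4 : ∀ s t, defined s t →
    defined t (star (mul s t)) ∧ mul (star s) t = mul t (star (mul s t))
  plus_star : ∀ s, star (plus s) = plus s
  star_plus : ∀ s, plus (star s) = star s

/-- The set of projections of a restriction semigroupoid. -/
def RestrictionSgpd.projections {S : Type u} (R : RestrictionSgpd S) : Set S :=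
  {e | ∃ s, e = R.plus s}

/-- The natural partial order of a restriction semigroupoid: `s ≤ t` iff `s⁺t = s`. -/
def RestrictionSgpd.natLe {S : Type u} (R : RestrictionSgpd S) (s t : S) : Prop :=
  R.defined (R.plus s) t ∧ R.mul (R.plus s) t = s

/-- A local meet-semilattice: a commutative semigroupoid in which every element is idempotent. -/
structure LocalMeetSemilattice (S : Type u) extends Semigroupoid S where
  idem_def : ∀ e, defined e e
  idem : ∀ e, mul e e = e
  comm_def : ∀ e f, defined e f → defined f e
  comm : ∀ e f, defined e f → mul e f = mul f e

/-- A local biordered Ehresmann category. -/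
structure LBEC (C : Type u) where
  obj : Set C
  dom : C → C
  cod : C → C
  comp : C → C → C
  dom_mem : ∀ x, dom x ∈ obj
  cod_mem : ∀ x, cod x ∈ obj
  dom_comp : ∀ x y, dom x = cod y → dom (comp x y) = dom y
  cod_comp : ∀ x y, dom x = cod y → cod (comp x y) = cod x
  comp_assoc : ∀ x y z, dom x = cod y → dom y = cod z →
    comp (comp x y) z = comp x (comp y z)
  dom_obj : ∀ e, e ∈ obj → dom e = e
  cod_obj : ∀ e, e ∈ obj → cod e = e
  comp_id : ∀ x e, e ∈ obj → dom x = e → comp x e = x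
  id_comp : ∀ y e, e ∈ obj → cod y = e → comp e y = y
  lel : C → C → Prop
  ler : C → C → Prop
  lel_refl : ∀ x, lel x x
  lel_antisymm : ∀ x y, lel x y → lel y x → x = y
  lel_trans : ∀ x y z, lel x y → lel y z → lel x z
  ler_refl : ∀ x, ler x x
  ler_antisymm : ∀ x y, ler x y → ler y x → x = y
  ler_trans : ∀ x y z, ler x y → ler y z → ler x z
  lel_dom : ∀ x y, lel x y → lel (dom x) (dom y)
  lel_cod : ∀ x y, lel x y → lel (cod x) (cod y)
  ler_dom : ∀ x y, ler x y → ler (dom x) (dom y)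
  ler_cod : ∀ x y, ler x y → ler (cod x) (cod y)
  lel_comp : ∀ x y x' y', lel x y → lel x' y' → dom x = cod x' → dom y = cod y' →
    lel (comp x x') (comp y y')
  ler_comp : ∀ x y x' y', ler x y → ler x' y' → dom x = cod x' → dom y = cod y' →
    ler (comp x x') (comp y y')
  cores : C → C → C
  cores_le : ∀ e x, e ∈ obj → lel e (cod x) → lel (cores e x) x
  cod_cores : ∀ e x, e ∈ obj → lel e (cod x) → cod (cores e x) = e
  cores_unique : ∀ e x y, e ∈ obj → lel e (cod x) → lel y x → cod y = e → y = cores e x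
  res : C → C → C
  res_le : ∀ x e, e ∈ obj → ler e (dom x) → ler (res x e) x
  dom_res : ∀ x e, e ∈ obj → ler e (dom x) → dom (res x e) = e
  res_unique : ∀ x e y, e ∈ obj → ler e (dom x) → ler y x → dom y = e → y = res x e
  mdef : C → C → Prop
  meet : C → C → C
  meet_mem : ∀ e f, e ∈ obj → f ∈ obj → mdef e f → meet e f ∈ obj
  mdef_self : ∀ e, e ∈ obj → mdef e e
  meet_self : ∀ e, e ∈ obj → meet e e = e
  mdef_comm : ∀ e f, e ∈ obj → f ∈ obj → mdef e f → mdef f e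
  meet_comm : ∀ e f, e ∈ obj → f ∈ obj → mdef e f → meet e f = meet f e
  meet_assoc₁ : ∀ e f g, e ∈ obj → f ∈ obj → g ∈ obj → mdef e f → mdef f g →
    mdef (meet e f) g ∧ mdef e (meet f g) ∧ meet (meet e f) g = meet e (meet f g)
  meet_assoc₂ : ∀ e f g, e ∈ obj → f ∈ obj → g ∈ obj → mdef e f → mdef (meet e f) g →
    mdef f g ∧ mdef e (meet f g) ∧ meet (meet e f) g = meet e (meet f g)
  meet_assoc₃ : ∀ e f g, e ∈ obj → f ∈ obj → g ∈ obj → mdef f g → mdef e (meet f g) →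
    mdef e f ∧ mdef (meet e f) g ∧ meet (meet e f) g = meet e (meet f g)
  ec4l : ∀ e f, e ∈ obj → f ∈ obj → (lel e f ↔ mdef e f ∧ meet e f = e)
  ec4r : ∀ e f, e ∈ obj → f ∈ obj → (ler e f ↔ mdef e f ∧ meet e f = e)
  ec5 : ∀ x z, (∃ y, lel x y ∧ ler y z) ↔ (∃ y, ler x y ∧ lel y z)
  ec6 : ∀ x y e, e ∈ obj → lel x y → mdef (dom x) e →
    lel (res x (meet (dom x) e)) (res y (meet (dom y) e))
  ec7 : ∀ x y e, e ∈ obj → ler x y → mdef e (cod x) →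
    ler (cores (meet e (cod x)) x) (cores (meet e (cod y)) y)

/-- `x ⊗ y` is defined iff `D(x) ∧ R(y)` is defined. -/
def LBEC.pdef {C : Type u} (E : LBEC C) (x y : C) : Prop :=
  E.mdef (E.dom x) (E.cod y)

/-- The pseudo-product `x ⊗ y = (x|e) ∘ (e|y)` where `e = D(x) ∧ R(y)`. -/
def LBEC.pprod {C : Type u} (E : LBEC C) (x y : C) : C :=
  E.comp (E.res x (E.meet (E.dom x) (E.cod y))) (E.cores (E.meet (E.dom x) (E.cod y)) y)

/-- A locally inductive category. -/
structure LInductiveCat (C : Type u) where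
  obj : Set C
  dom : C → C
  cod : C → C
  comp : C → C → C
  dom_mem : ∀ x, dom x ∈ obj
  cod_mem : ∀ x, cod x ∈ obj
  dom_comp : ∀ x y, dom x = cod y → dom (comp x y) = dom y
  cod_comp : ∀ x y, dom x = cod y → cod (comp x y) = cod x
  comp_assoc : ∀ x y z, dom x = cod y → dom y = cod z →
    comp (comp x y) z = comp x (comp y z)
  dom_obj : ∀ e, e ∈ obj → dom e = e
  cod_obj : ∀ e, e ∈ obj → cod e = e
  comp_id : ∀ x e, e ∈ obj → dom x = e → comp x e = x
  id_comp : ∀ y e, e ∈ obj → cod y = e → comp e y = y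
  le : C → C → Prop
  le_refl : ∀ x, le x x
  le_antisymm : ∀ x y, le x y → le y x → x = y
  le_trans : ∀ x y z, le x y → le y z → le x z
  le_dom : ∀ x y, le x y → le (dom x) (dom y)
  le_cod : ∀ x y, le x y → le (cod x) (cod y)
  le_comp : ∀ x y x' y', le x y → le x' y' → dom x = cod x' → dom y = cod y' →
    le (comp x x') (comp y y')
  res : C → C → C
  res_le : ∀ x e, e ∈ obj → le e (dom x) → le (res x e) x
  dom_res : ∀ x e, e ∈ obj → le e (dom x) → dom (res x e) = e
  res_unique : ∀ x e y, e ∈ obj → le e (dom x) → le y x → dom y = e → y = res x e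
  cores : C → C → C
  cores_le : ∀ e x, e ∈ obj → le e (cod x) → le (cores e x) x
  cod_cores : ∀ e x, e ∈ obj → le e (cod x) → cod (cores e x) = e
  cores_unique : ∀ e x y, e ∈ obj → le e (cod x) → le y x → cod y = e → y = cores e x
  mdef : C → C → Prop
  meet : C → C → C
  meet_mem : ∀ e f, e ∈ obj → f ∈ obj → mdef e f → meet e f ∈ obj
  mdef_self : ∀ e, e ∈ obj → mdef e e
  meet_self : ∀ e, e ∈ obj → meet e e = e
  mdef_comm : ∀ e f, e ∈ obj → f ∈ obj → mdef e f → mdef f e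
  meet_comm : ∀ e f, e ∈ obj → f ∈ obj → mdef e f → meet e f = meet f e
  meet_assoc₁ : ∀ e f g, e ∈ obj → f ∈ obj → g ∈ obj → mdef e f → mdef f g →
    mdef (meet e f) g ∧ mdef e (meet f g) ∧ meet (meet e f) g = meet e (meet f g)
  meet_assoc₂ : ∀ e f g, e ∈ obj → f ∈ obj → g ∈ obj → mdef e f → mdef (meet e f) g →
    mdef f g ∧ mdef e (meet f g) ∧ meet (meet e f) g = meet e (meet f g)
  meet_assoc₃ : ∀ e f g, e ∈ obj → f ∈ obj → g ∈ obj → mdef f g → mdef e (meet f g) →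
    mdef e f ∧ mdef (meet e f) g ∧ meet (meet e f) g = meet e (meet f g)
  le_meet : ∀ e f, e ∈ obj → f ∈ obj → (le e f ↔ mdef e f ∧ meet e f = e)

/-- `Cat` is the local biordered Ehresmann category `C(S)` associated with the two-sided
Ehresmann semigroupoid `E`. -/
def IsCofS {S : Type u} (E : EhresmannSgpd S) (Cat : LBEC S) : Prop :=
  Cat.obj = E.projections ∧
  Cat.dom = E.star ∧
  Cat.cod = E.plus ∧
  (∀ s t, E.star s = E.plus t → Cat.comp s t = E.mul s t) ∧
  Cat.lel = E.lel ∧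
  Cat.ler = E.ler ∧
  (∀ e f, e ∈ E.projections → f ∈ E.projections →
    (Cat.mdef e f ↔ E.defined e f) ∧ (E.defined e f → Cat.meet e f = E.mul e f))

/-- `E` is the two-sided Ehresmann semigroupoid `S(C)` associated with the local biordered
Ehresmann category `Cat`. -/
def IsSofC {C : Type u} (Cat : LBEC C) (E : EhresmannSgpd C) : Prop :=
  (E.defined = Cat.pdef) ∧
  (∀ x y, E.defined x y → E.mul x y = Cat.pprod x y) ∧
  E.plus = Cat.cod ∧
  E.star = Cat.dom

/-- `L` is the locally inductive category `C(S)` associated with the two-sided restriction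
semigroupoid `R`. -/
def IsCofSRes {S : Type u} (R : RestrictionSgpd S) (L : LInductiveCat S) : Prop :=
  L.obj = R.projections ∧
  L.dom = R.star ∧
  L.cod = R.plus ∧
  (∀ s t, R.star s = R.plus t → L.comp s t = R.mul s t) ∧
  L.le = R.natLe ∧
  (∀ e f, e ∈ R.projections → f ∈ R.projections →
    (L.mdef e f ↔ R.defined e f) ∧ (R.defined e f → L.meet e f = R.mul e f))

/-- `t` is a pseudo-inverse of `s` in the semigroupoid `Sg`. -/
def Semigroupoid.PInv {S : Type u} (Sg : Semigroupoid S) (s t : S) : Prop :=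
  Sg.defined s t ∧ Sg.defined t s ∧ Sg.mul (Sg.mul s t) s = s ∧ Sg.mul (Sg.mul t s) t = t

/-- The restriction semigroupoid `R` is an inverse semigroupoid with `s⁺ = ss⁻¹`, `s* = s⁻¹s`. -/
def RestrictionSgpd.IsInverse {S : Type u} (R : RestrictionSgpd S) : Prop :=
  ∃ inv : S → S,
    (∀ s, R.toSemigroupoid.PInv s (inv s)) ∧
    (∀ s t, R.toSemigroupoid.PInv s t → t = inv s) ∧
    (∀ s, R.plus s = R.mul s (inv s) ∧ R.star s = R.mul (inv s) s)

/-- `y` is an inverse of `x` in the category `L`. -/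
def LInductiveCat.IsInv {C : Type u} (L : LInductiveCat C) (x y : C) : Prop :=
  L.dom y = L.cod x ∧ L.cod y = L.dom x ∧ L.comp x y = L.cod x ∧ L.comp y x = L.dom x

/-- The category `L` is a groupoid: every element has a unique inverse. -/
def LInductiveCat.IsGroupoid {C : Type u} (L : LInductiveCat C) : Prop :=
  ∀ x, ∃! y, L.IsInv x y

/-- Inversion in `L` is order-preserving (condition (ig1) of locally inductive groupoids). -/
def LInductiveCat.InvOrdPres {C : Type u} (L : LInductiveCat C) : Prop :=
  ∀ x y x' y', L.IsInv x x' → L.IsInv y y' → L.le x y → L.le x' y'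

/-- `(S0, D, R)` is a category structure on the semigroupoid `Sg`. -/
def Semigroupoid.CatStructOn {S : Type u} (Sg : Semigroupoid S) (S0 : Set S)
    (D R : S → S) : Prop :=
  (∀ s, D s ∈ S0) ∧ (∀ s, R s ∈ S0) ∧
  (∀ s t, Sg.defined s t ↔ D s = R t) ∧
  (∀ s t, Sg.defined s t → D (Sg.mul s t) = D t ∧ R (Sg.mul s t) = R s) ∧
  (∀ e, e ∈ S0 → D e = e ∧ R e = e) ∧
  (∀ s, Sg.mul s (D s) = s) ∧
  (∀ t, Sg.mul (R t) t = t)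

/-- `(U0, d, r)` is a category structure on the sub-semigroupoid of `Sg` with underlying
set `U`. -/
def Semigroupoid.CatStructOnSubset {S : Type u} (Sg : Semigroupoid S) (U : Set S)
    (U0 : Set S) (d r : S → S) : Prop :=
  U0 ⊆ U ∧
  (∀ e, e ∈ U → d e ∈ U0 ∧ r e ∈ U0) ∧
  (∀ e f, e ∈ U → f ∈ U → (Sg.defined e f ↔ d e = r f)) ∧
  (∀ e f, e ∈ U → f ∈ U → Sg.defined e f →
    d (Sg.mul e f) = d f ∧ r (Sg.mul e f) = r e) ∧
  (∀ e, e ∈ U0 → d e = e ∧ r e = e) ∧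
  (∀ e, e ∈ U → Sg.mul e (d e) = e ∧ Sg.mul (r e) e = e)

/-- A (2,1,1)-morphism between two-sided Ehresmann semigroupoids. -/
def Is211 {S : Type u} {T : Type u} (E : EhresmannSgpd S) (F : EhresmannSgpd T)
    (φ : S → T) : Prop :=
  (∀ s t, E.defined s t →
    F.defined (φ s) (φ t) ∧ φ (E.mul s t) = F.mul (φ s) (φ t)) ∧
  (∀ s, φ (E.plus s) = F.plus (φ s)) ∧
  (∀ s, φ (E.star s) = F.star (φ s))

/-- An inductive functor between local biordered Ehresmann categories. -/
def IndFunctor {C : Type u} {D : Type u} (A : LBEC C) (B : LBEC D) (φ : C → D) : Prop :=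
  (∀ x, φ (A.dom x) = B.dom (φ x)) ∧
  (∀ x, φ (A.cod x) = B.cod (φ x)) ∧
  (∀ x y, A.dom x = A.cod y → φ (A.comp x y) = B.comp (φ x) (φ y)) ∧
  (∀ x y, A.lel x y → B.lel (φ x) (φ y)) ∧
  (∀ x y, A.ler x y → B.ler (φ x) (φ y)) ∧
  (∀ e f, e ∈ A.obj → f ∈ A.obj → A.mdef e f →
    B.mdef (φ e) (φ f) ∧ φ (A.meet e f) = B.meet (φ e) (φ f))

/-- A ∨-premorphism between two-sided restriction semigroupoids. -/
def VPre {S : Type u} {T : Type u} (R1 : RestrictionSgpd S) (R2 : RestrictionSgpd T)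
    (φ : S → T) : Prop :=
  (∀ s t, R1.defined s t →
    R2.defined (φ s) (φ t) ∧ R2.natLe (φ (R1.mul s t)) (R2.mul (φ s) (φ t))) ∧
  (∀ s, φ (R1.plus s) = R2.plus (φ s)) ∧
  (∀ s, φ (R1.star s) = R2.star (φ s))

/-- An ordered functor between locally inductive categories. -/
def OrdFunctor {C : Type u} {D : Type u} (A : LInductiveCat C) (B : LInductiveCat D)
    (φ : C → D) : Prop :=
  (∀ x, φ (A.dom x) = B.dom (φ x)) ∧
  (∀ x, φ (A.cod x) = B.cod (φ x)) ∧
  (∀ x y, A.dom x = A.cod y → φ (A.comp x y) = B.comp (φ x) (φ y)) ∧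
  (∀ x y, A.le x y → B.le (φ x) (φ y))

/-- Composition of binary relations on `X`. -/
def rcomp {X : Type u} (R S : Set (X × X)) : Set (X × X) :=
  {p | ∃ z, (p.1, z) ∈ R ∧ (z, p.2) ∈ S}

/-- `R⁺ = {(x,x) : (x,y) ∈ R for some y}`. -/
def rplus {X : Type u} (R : Set (X × X)) : Set (X × X) :=
  {p | p.1 = p.2 ∧ ∃ y, (p.1, y) ∈ R}

/-- `R* = {(y,y) : (x,y) ∈ R for some x}`. -/
def rstar {X : Type u} (R : Set (X × X)) : Set (X × X) :=
  {p | p.1 = p.2 ∧ ∃ x, (x, p.2) ∈ R}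

/-! ### Projections and the natural order of a restriction semigroupoid -/

namespace RestrictionSgpd

variable {S : Type u} (R : RestrictionSgpd S)

lemma plus_plus (s : S) : R.plus (R.plus s) = R.plus s := by
  have h := R.star_plus (R.plus s)
  rwa [R.plus_star] at h

lemma star_star (s : S) : R.star (R.star s) = R.star s := by
  have h := R.plus_star (R.star s)
  rwa [R.star_plus] at h

lemma plus_idem (s : S) :
    R.defined (R.plus s) (R.plus s) ∧ R.mul (R.plus s) (R.plus s) = R.plus s := by
  have h := R.lr1 (R.plus s)
  rwa [R.plus_plus] at h

lemma star_idem (s : S) :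
    R.defined (R.star s) (R.star s) ∧ R.mul (R.star s) (R.star s) = R.star s := by
  have h := R.rr1 (R.star s)
  rwa [R.star_star] at h

/-- Definedness of a product depends only on the domain of the left factor and the range of the
right one. -/
lemma defined_iff (s t : S) : R.defined s t ↔ R.defined (R.star s) (R.plus t) := by
  obtain ⟨hs, es⟩ := R.rr1 s
  obtain ⟨ht, et⟩ := R.lr1 t
  constructor
  · intro h
    have h1 := (R.assoc₂ s (R.star s) t hs (by rwa [es])).1
    exact (R.assoc₃ (R.star s) (R.plus t) t ht (by rwa [et])).1
  · intro h
    have h1 := (R.assoc₁ s (R.star s) (R.plus t) hs h).1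
    rw [es] at h1
    have h2 := (R.assoc₁ s (R.plus t) t h1 ht).2.1
    rwa [et] at h2

lemma defined_of_eq {s t : S} (h : R.star s = R.plus t) : R.defined s t := by
  rw [R.defined_iff, h]
  exact (R.plus_idem t).1

lemma natLe_trans {s t r : S} (h1 : R.natLe s t) (h2 : R.natLe t r) : R.natLe s r := by
  obtain ⟨d1, e1⟩ := h1
  obtain ⟨d2, e2⟩ := h2
  obtain ⟨da, db, e⟩ := R.assoc₃ (R.plus s) (R.plus t) r d2 (by rwa [e2])
  have h := R.lr3 s t da
  rw [e1] at h
  rw [h, e2, e1] at e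
  exact ⟨by rwa [h] at db, e⟩

/-- The projection `e = s*t⁺` is the meet of `s*` and `t⁺`, at least to the extent that it is a
lower bound of both. -/
lemma meet_facts {s t : S} (h : R.defined s t) :
    R.plus (R.mul (R.star s) (R.plus t)) = R.mul (R.star s) (R.plus t) ∧
    R.natLe (R.mul (R.star s) (R.plus t)) (R.star s) ∧
    R.natLe (R.mul (R.star s) (R.plus t)) (R.plus t) ∧
    R.defined (R.star s) (R.mul (R.star s) (R.plus t)) ∧
    R.mul (R.star s) (R.mul (R.star s) (R.plus t)) = R.mul (R.star s) (R.plus t) := by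
  have d := (R.defined_iff s t).1 h
  have hp : R.plus (R.mul (R.star s) (R.plus t)) = R.mul (R.star s) (R.plus t) := by
    have h3 := R.lr3 (R.star s) t (by rwa [R.star_plus])
    rw [R.star_plus] at h3
    rw [h3, R.plus_plus]
  have hc := R.lr2 (R.star s) t (by rwa [R.star_plus])
  rw [R.star_plus] at hc
  obtain ⟨ds, es⟩ := R.star_idem s
  obtain ⟨dt, et⟩ := R.plus_idem t
  have A := R.assoc₁ _ _ _ d dt
  have B := R.assoc₁ _ _ _ ds d
  have C := R.assoc₁ _ _ _ hc.1 ds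
  refine ⟨hp, ⟨?_, ?_⟩, ⟨?_, ?_⟩, B.2.1, ?_⟩
  · rw [hp, hc.2]; exact C.1
  · rw [hp]; nth_rewrite 1 [hc.2]; rw [C.2.2, es, hc.2]
  · rw [hp]; exact A.1
  · rw [hp, A.2.2, et]
  · rw [← B.2.2, es]

/-- A defined product `st` is a composite `(se) ∘ (et)` in `C(S)`, where `e = s*t⁺` (passed as a
variable together with its defining equation). -/
lemma factor {s t e : S} (h : R.defined s t) (he : e = R.mul (R.star s) (R.plus t)) :
    R.star (R.mul s e) = R.plus (R.mul e t) ∧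
    R.mul s t = R.mul (R.mul s e) (R.mul e t) ∧
    R.natLe (R.mul s e) s ∧ R.natLe (R.mul e t) t := by
  obtain ⟨hp, -, ⟨dr, er⟩, dl, el⟩ := R.meet_facts h
  rw [← he] at hp dr er dl el
  rw [hp] at dr er
  have hs : R.star e = e := by rw [← hp, R.plus_star]
  have dse : R.defined s e := by rwa [R.defined_iff, hp]
  have det : R.defined e t := by rwa [R.defined_iff, hs]
  have h1 : R.star (R.mul s e) = e := by
    have h := R.rr3 s e (by rwa [hs])
    rw [hs, el] at h
    exact h.symm
  have h2 : R.plus (R.mul e t) = e := by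
    have h := R.lr3 e t (by rwa [hp])
    rw [hp, er] at h
    exact h.symm
  have h4 := R.lr4 s e dse
  rw [hp] at h4
  refine ⟨h1.trans h2.symm, ?_, ⟨h4.1, h4.2.symm⟩, by rwa [h2], by rw [h2]⟩
  have dee : R.defined e e ∧ R.mul e e = e := by
    have h := R.plus_idem e
    rwa [hp] at h
  obtain ⟨ds, es⟩ := R.rr1 s
  obtain ⟨dt, et⟩ := R.lr1 t
  have d := (R.defined_iff s t).1 h
  -- `(se)(et) = s(e(et)) = s(et)`
  have A := R.assoc₁ e e t dee.1 det
  have B := R.assoc₁ s e (R.mul e t) dse A.2.1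
  rw [B.2.2, ← A.2.2, dee.2]
  -- `s(et) = s(s*(t⁺t)) = (ss*)t = st`
  have C := R.assoc₁ (R.star s) (R.plus t) t d dt
  rw [← he, et] at C
  rw [C.2.2, ← (R.assoc₁ s (R.star s) t ds C.2.1).2.2, es]

/-- If some `f` lies below both `s*` and `t⁺`, then `st` is defined. -/
lemma defined_of_lower {s t f : S} (h1 : R.natLe f (R.star s)) (h2 : R.natLe f (R.plus t)) :
    R.defined s t := by
  obtain ⟨d1, e1⟩ := h1
  have hf : R.mul (R.plus f) (R.star s) = R.plus f := by
    have h := R.lr3 f (R.star s) (by rwa [R.star_plus])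
    rw [R.star_plus, e1] at h
    exact e1.trans h
  rw [R.defined_iff]
  exact (R.assoc₂ (R.plus f) (R.star s) (R.plus t) d1 (by rw [hf]; exact h2.1)).1

/-- A composite of lower bounds is a lower bound of the product; the range of the composite enters
as the hypothesis `hp`. -/
lemma mul_le {a b s t : S} (ha : R.natLe a s) (hb : R.natLe b t) (hab : R.star a = R.plus b)
    (hp : R.plus (R.mul a b) = R.plus a) (h : R.defined s t) :
    R.natLe (R.mul a b) (R.mul s t) := by
  obtain ⟨da, ea⟩ := ha
  obtain ⟨db, eb⟩ := hb
  have A := R.assoc₁ (R.plus a) s t da h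
  obtain ⟨dr, er⟩ := R.rr1 a
  have B := R.assoc₁ a (R.star a) t dr (by rwa [hab])
  rw [er, hab, eb] at B
  refine ⟨by rw [hp]; exact A.2.1, ?_⟩
  rw [hp, ← A.2.2, ea, B.2.2]

end RestrictionSgpd

/-! ### ∨-premorphisms and ordered functors -/

lemma VPre.mono {S T : Type u} {R1 : RestrictionSgpd S} {R2 : RestrictionSgpd T} {φ : S → T}
    (h : VPre R1 R2 φ) {s t : S} (hst : R1.natLe s t) : R2.natLe (φ s) (φ t) := by
  obtain ⟨d, e⟩ := hst
  obtain ⟨d2, d3, e3⟩ := h.1 _ _ d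
  rw [e, h.2.1] at d3 e3
  rw [h.2.1] at d2
  obtain ⟨di, ei⟩ := R2.plus_idem (φ s)
  have A := R2.assoc₁ _ _ _ di d2
  rw [ei] at A
  exact ⟨d2, A.2.2.trans e3⟩

lemma VPre.comp {S T W : Type u} {R1 : RestrictionSgpd S} {R2 : RestrictionSgpd T}
    {R3 : RestrictionSgpd W} {φ : S → T} {ψ : T → W}
    (h1 : VPre R1 R2 φ) (h2 : VPre R2 R3 ψ) : VPre R1 R3 (ψ ∘ φ) := by
  refine ⟨fun s t d => ?_, fun s => ?_, fun s => ?_⟩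
  · obtain ⟨d1, l1⟩ := h1.1 s t d
    obtain ⟨d2, l2⟩ := h2.1 _ _ d1
    exact ⟨d2, R3.natLe_trans (h2.mono l1) l2⟩
  · simp [h1.2.1, h2.2.1]
  · simp [h1.2.2, h2.2.2]

lemma IsCofSRes.plus_mul {S : Type u} {R : RestrictionSgpd S} {L : LInductiveCat S}
    (h : IsCofSRes R L) {s t : S} (hst : R.star s = R.plus t) :
    R.plus (R.mul s t) = R.plus s := by
  obtain ⟨-, hd, hc, hm, -, -⟩ := h
  have := L.cod_comp s t (by rwa [hd, hc])
  rwa [hm s t hst, hc] at this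

lemma vpre_iff_ordFunctor {S T : Type u} {R1 : RestrictionSgpd S} {R2 : RestrictionSgpd T}
    {L1 : LInductiveCat S} {L2 : LInductiveCat T} (H1 : IsCofSRes R1 L1) (H2 : IsCofSRes R2 L2)
    (φ : S → T) : VPre R1 R2 φ ↔ OrdFunctor L1 L2 φ := by
  have p1 := @H1.plus_mul
  have p2 := @H2.plus_mul
  obtain ⟨-, hd1, hc1, hm1, hl1, -⟩ := H1
  obtain ⟨-, hd2, hc2, hm2, hl2, -⟩ := H2
  unfold OrdFunctor
  rw [hd1, hc1, hl1, hd2, hc2, hl2]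
  constructor
  · intro h
    refine ⟨h.2.2, h.2.1, fun s t hst => ?_, fun s t hst => h.mono hst⟩
    have hst' : R2.star (φ s) = R2.plus (φ t) := by rw [← h.2.2, ← h.2.1, hst]
    rw [hm1 s t hst, hm2 _ _ hst']
    obtain ⟨-, -, e⟩ := h.1 s t (R1.defined_of_eq hst)
    -- `φ(st)` and `φ(s)φ(t)` have the same range, and comparable elements with equal range agree
    rw [← h.2.1, p1 hst, h.2.1, ← p2 hst', (R2.lr1 _).2] at e
    exact e.symm
  · rintro ⟨hs, hp, hf, hle⟩
    refine ⟨fun s t d => ?_, hp, hs⟩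
    obtain ⟨-, le1, le2, -, -⟩ := R1.meet_facts d
    obtain ⟨hst, hmul, ls, lt⟩ := R1.factor d rfl
    have l1 := hle _ _ le1
    have l2 := hle _ _ le2
    rw [hs] at l1
    rw [hp] at l2
    have d2 := R2.defined_of_lower l1 l2
    refine ⟨d2, ?_⟩
    have hst' := congrArg φ hst
    rw [hs, hp] at hst'
    have hff := hf _ _ hst
    rw [hm1 _ _ hst, hm2 _ _ hst'] at hff
    rw [hmul, hff]
    exact R2.mul_le (hle _ _ ls) (hle _ _ lt) hst' (p2 hst') d2

/-- For two-sided restriction semigroupoids `S`, `T` with associated locally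
inductive categories `C(S)`, `C(T)`, a function `φ : S → T` is a ∨-premorphism iff
`φ : C(S) → C(T)` is an ordered functor; in particular every ∨-premorphism is
order-preserving, and compositions of ∨-premorphisms are ∨-premorphisms. -/
theorem stmt19 :
    (∀ (S T : Type u) (R1 : RestrictionSgpd S) (R2 : RestrictionSgpd T)
      (L1 : LInductiveCat S) (L2 : LInductiveCat T),
      IsCofSRes R1 L1 → IsCofSRes R2 L2 →
      ∀ φ : S → T, VPre R1 R2 φ ↔ OrdFunctor L1 L2 φ) ∧
    (∀ (S T : Type u) (R1 : RestrictionSgpd S) (R2 : RestrictionSgpd T) (φ : S → T),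
      VPre R1 R2 φ → ∀ s t, R1.natLe s t → R2.natLe (φ s) (φ t)) ∧
    (∀ (S T W : Type u) (R1 : RestrictionSgpd S) (R2 : RestrictionSgpd T)
      (R3 : RestrictionSgpd W) (φ : S → T) (ψ : T → W),
      VPre R1 R2 φ → VPre R2 R3 ψ → VPre R1 R3 (ψ ∘ φ)) := by
  exact ⟨fun _ _ _ _ _ _ H1 H2 φ => vpre_iff_ordFunctor H1 H2 φ,
    fun _ _ _ _ _ h _ _ hst => h.mono hst,
    fun _ _ _ _ _ _ _ _ h1 h2 => h1.comp h2⟩
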